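/- Let P ⊂ ℝ² be a two-dimensional convex lattice polytope containing exactly n lattice points and no lattice points in its interior. Then P is affinely unimodularly equivalent to exactly one of the following: the triangle with vertices (0,0), (n−2,0), (0,1); a quadrilateral with vertices (0,0), (k,0), (l,1), (0,1) for some integers k ≥ l ≥ 1 with k + l = n − 2; or (only when n = 6) the triangle with vertices (0,0), (2,0), (0,2). -/

import Mathlib

/-- The coercion of an integer lattice point of `ℤ²` to `ℝ²`. -/
def toR2 (v : Fin 2 → ℤ) : Fin 2 → ℝ := fun i => (v i : ℝ)

/-- A convex lattice polytope in `ℝ²`: the convex hull of a nonempty finite set of points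
of `ℤ²`. -/
def IsConvexLatticePolytope (P : Set (Fin 2 → ℝ)) : Prop :=
  ∃ S : Finset (Fin 2 → ℤ), S.Nonempty ∧ P = convexHull ℝ (toR2 '' (S : Set (Fin 2 → ℤ)))

/-- The affine map `ℝ² → ℝ²` given by `x ↦ A x + b`, for an integer matrix `A` and an
integer vector `b`. -/
def unimodMap (A : Matrix (Fin 2) (Fin 2) ℤ) (b : Fin 2 → ℤ) (x : Fin 2 → ℝ) : Fin 2 → ℝ :=
  (A.map (Int.cast : ℤ → ℝ)).mulVec x + toR2 b

/-- Two subsets of `ℝ²` are affinely unimodularly equivalent if an affine map `x ↦ A x + b`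
with `A ∈ GL₂(ℤ)` and `b ∈ ℤ²` carries the first onto the second. -/
def UnimodEquiv (P Q : Set (Fin 2 → ℝ)) : Prop :=
  ∃ (A : Matrix (Fin 2) (Fin 2) ℤ) (b : Fin 2 → ℤ), IsUnit A.det ∧ unimodMap A b '' P = Q

/-- The triangle with vertices `(0,0)`, `(n-2,0)`, `(0,1)`. -/
def modelTriangle (n : ℕ) : Set (Fin 2 → ℝ) :=
  convexHull ℝ {![0, 0], ![(n : ℝ) - 2, 0], ![0, 1]}

/-- The quadrilateral with vertices `(0,0)`, `(k,0)`, `(l,1)`, `(0,1)`. -/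
def modelQuad (k l : ℕ) : Set (Fin 2 → ℝ) :=
  convexHull ℝ {![0, 0], ![(k : ℝ), 0], ![(l : ℝ), 1], ![0, 1]}

/-- The triangle with vertices `(0,0)`, `(2,0)`, `(0,2)`. -/
def modelI : Set (Fin 2 → ℝ) :=
  convexHull ℝ {![0, 0], ![2, 0], ![0, 2]}

/-- The list of model polytopes with `n` lattice points and no interior lattice points. -/
def modelPolytopes (n : ℕ) : Set (Set (Fin 2 → ℝ)) :=
  {M | M = modelTriangle n ∨
    (∃ k l : ℕ, 1 ≤ l ∧ l ≤ k ∧ k + l = n - 2 ∧ M = modelQuad k l) ∨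
    (n = 6 ∧ M = modelI)}

/-! ### Combinatorial part: predicates on `ℤ × ℤ` -/

/-- Integer affine unimodular equivalence of predicates on the lattice. -/
def Eqv (S T : ℤ → ℤ → Prop) : Prop :=
  ∃ p q r s t u : ℤ, (p * t - q * s = 1 ∨ p * t - q * s = -1) ∧
    ∀ x y, S x y ↔ T (p * x + q * y + r) (s * x + t * y + u)

/-- Closedness under lattice points of triangles. -/
def Cvx (S : ℤ → ℤ → Prop) : Prop :=
  ∀ x1 y1 x2 y2 x3 y3 n1 n2 n3 x y : ℤ, 0 ≤ n1 → 0 ≤ n2 → 0 ≤ n3 → 0 < n1 + n2 + n3 →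
    (n1 + n2 + n3) * x = n1 * x1 + n2 * x2 + n3 * x3 →
    (n1 + n2 + n3) * y = n1 * y1 + n2 * y2 + n3 * y3 →
    S x1 y1 → S x2 y2 → S x3 y3 → S x y

/-- Each lattice point has a supporting functional. -/
def Sup (S : ℤ → ℤ → Prop) : Prop :=
  ∀ x y : ℤ, S x y → ∃ α β : ℝ, (α ≠ 0 ∨ β ≠ 0) ∧
    ∀ x' y' : ℤ, S x' y' → α * (x' - x) + β * (y' - y) ≤ 0

def Trap (k l : ℤ) (x y : ℤ) : Prop := (y = 0 ∧ 0 ≤ x ∧ x ≤ k) ∨ (y = 1 ∧ 0 ≤ x ∧ x ≤ l)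
def Seg (m : ℤ) (x y : ℤ) : Prop := y = 0 ∧ 0 ≤ x ∧ x ≤ m
def TriI (x y : ℤ) : Prop := 0 ≤ x ∧ 0 ≤ y ∧ x + y ≤ 2

def Good (S : ℤ → ℤ → Prop) : Prop :=
  (∃ m, 0 ≤ m ∧ Eqv S (Seg m)) ∨ (∃ k l, 1 ≤ k ∧ 0 ≤ l ∧ l ≤ k ∧ Eqv S (Trap k l)) ∨ Eqv S TriI

lemma Eqv.trans {S T U : ℤ → ℤ → Prop} (h : Eqv S T) (h' : Eqv T U) : Eqv S U := by
  obtain ⟨p, q, r, s, t, u, hd, h⟩ := h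
  obtain ⟨p', q', r', s', t', u', hd', h'⟩ := h'
  refine ⟨p' * p + q' * s, p' * q + q' * t, p' * r + q' * u + r', s' * p + t' * s,
    s' * q + t' * t, s' * r + t' * u + u', ?_, ?_⟩
  · have : (p' * p + q' * s) * (s' * q + t' * t) - (p' * q + q' * t) * (s' * p + t' * s)
      = (p * t - q * s) * (p' * t' - q' * s') := by ring
    rw [this]
    rcases hd with hd | hd <;> rcases hd' with hd' | hd' <;> rw [hd, hd'] <;> norm_num
  · intro x y
    rw [h, h']
    have e1 : p' * (p * x + q * y + r) + q' * (s * x + t * y + u) + r' =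
      (p' * p + q' * s) * x + (p' * q + q' * t) * y + (p' * r + q' * u + r') := by ring
    have e2 : s' * (p * x + q * y + r) + t' * (s * x + t * y + u) + u' =
      (s' * p + t' * s) * x + (s' * q + t' * t) * y + (s' * r + t' * u + u') := by ring
    rw [e1, e2]

lemma Eqv.symm {S T : ℤ → ℤ → Prop} (h : Eqv S T) : Eqv T S := by
  obtain ⟨p, q, r, s, t, u, hd, h⟩ := h
  obtain ⟨e, he, hd⟩ : ∃ e : ℤ, e * e = 1 ∧ p * t - q * s = e := by
    rcases hd with hd | hd
    · exact ⟨1, by norm_num, hd⟩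
    · exact ⟨-1, by norm_num, hd⟩
  refine ⟨e * t, -(e * q), -(e * t * r) + e * q * u, -(e * s), e * p,
    e * s * r - e * p * u, ?_, ?_⟩
  · have : e * t * (e * p) - -(e * q) * -(e * s) = (e * e) * (p * t - q * s) := by ring
    rw [this, he, hd, one_mul]
    have : (e - 1) * (e + 1) = 0 := by linear_combination he
    rcases mul_eq_zero.1 this with h | h
    · left; omega
    · right; omega
  · intro x y
    rw [h]
    have e1 : p * (e * t * x + -(e * q) * y + (-(e * t * r) + e * q * u)) +
        q * (-(e * s) * x + e * p * y + (e * s * r - e * p * u)) + r = x := by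
      linear_combination (e * x - e * r) * hd + (x - r) * he
    have e2 : s * (e * t * x + -(e * q) * y + (-(e * t * r) + e * q * u)) +
        t * (-(e * s) * x + e * p * y + (e * s * r - e * p * u)) + u = y := by
      linear_combination (e * y - e * u) * hd + (y - u) * he
    rw [e1, e2]

lemma Good.of_eqv {S T : ℤ → ℤ → Prop} (h : Eqv S T) (g : Good T) : Good S := by
  rcases g with ⟨m, hm, g⟩ | ⟨k, l, h1, h2, h3, g⟩ | g
  · exact Or.inl ⟨m, hm, h.trans g⟩
  · exact Or.inr (Or.inl ⟨k, l, h1, h2, h3, h.trans g⟩)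
  · exact Or.inr (Or.inr (h.trans g))

lemma Cvx.of_eqv {S T : ℤ → ℤ → Prop} (h : Eqv T S) (c : Cvx S) : Cvx T := by
  obtain ⟨p, q, r, s, t, u, hd, h⟩ := h
  intro x1 y1 x2 y2 x3 y3 n1 n2 n3 x y h1 h2 h3 h4 hx hy s1 s2 s3
  rw [h] at *
  refine c _ _ _ _ _ _ n1 n2 n3 _ _ h1 h2 h3 h4 ?_ ?_ s1 s2 s3
  · linear_combination p * hx + q * hy
  · linear_combination s * hx + t * hy

lemma Sup.of_eqv {S T : ℤ → ℤ → Prop} (h : Eqv T S) (c : Sup S) : Sup T := by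
  obtain ⟨p, q, r, s, t, u, hd, h⟩ := h
  intro x y hxy
  obtain ⟨α, β, h0, hs⟩ := c _ _ ((h x y).1 hxy)
  refine ⟨α * p + β * s, α * q + β * t, ?_, ?_⟩
  · by_contra hcon
    push Not at hcon
    obtain ⟨z1, z2⟩ := hcon
    have hd' : ((p : ℝ) * t - q * s) ≠ 0 := by
      rcases hd with hd | hd
      · have : ((p : ℝ) * t - q * s) = 1 := by exact_mod_cast hd
        rw [this]; norm_num
      · have : ((p : ℝ) * t - q * s) = -1 := by exact_mod_cast hd
        rw [this]; norm_num
    have a0 : α * ((p : ℝ) * t - q * s) = 0 := by linear_combination t * z1 - s * z2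
    have b0 : β * ((p : ℝ) * t - q * s) = 0 := by linear_combination p * z2 - q * z1
    rcases h0 with h0 | h0
    · exact h0 ((mul_eq_zero.1 a0).resolve_right hd')
    · exact h0 ((mul_eq_zero.1 b0).resolve_right hd')
  · intro x' y' h'
    have := hs _ _ ((h x' y').1 h')
    push_cast at this
    linarith

lemma exists_ceil (a b : ℤ) (hb : 0 < b) : ∃ c : ℤ, 0 ≤ b * c - a ∧ b * c - a ≤ b - 1 := by
  refine ⟨-((-a) / b), ?_, ?_⟩
  · have := Int.mul_ediv_self_le (x := -a) (k := b) hb.ne'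
    linarith
  · have := Int.lt_mul_ediv_self_add (x := -a) hb
    linarith

lemma Cvx.up {S : ℤ → ℤ → Prop} (c : Cvx S) {x0 y0 a b : ℤ} (h0 : S x0 y0)
    (h1 : S (x0 + 1) y0) (h : S a b) (hb : y0 < b) : ∃ z, S z (y0 + 1) := by
  obtain ⟨z, z1, z2⟩ := exists_ceil (a - x0) (b - y0) (by omega)
  refine ⟨z + x0, c x0 y0 (x0 + 1) y0 a b ((b - y0) - 1 - ((b - y0) * z - (a - x0)))
    ((b - y0) * z - (a - x0)) 1 _ _ (by linarith) z1 (by norm_num) (by linarith) ?_ ?_ h0 h1 h⟩ <;>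
  ring

lemma Eqv.flip (S : ℤ → ℤ → Prop) : Eqv (fun x y => S x (-y)) S :=
  ⟨1, 0, 0, 0, -1, 0, by norm_num, fun x y => by simp⟩

lemma Eqv.rot (S : ℤ → ℤ → Prop) : Eqv (fun x y => S (-y) x) S :=
  ⟨0, -1, 0, 1, 0, 0, by norm_num, fun x y => by simp⟩

lemma Cvx.down {S : ℤ → ℤ → Prop} (c : Cvx S) {x0 a b : ℤ} (h0 : S x0 0)
    (h1 : S (x0 + 1) 0) (h : S a b) (hb : b < 0) : ∃ z, S z (-1) := by
  have := Cvx.up (c.of_eqv (Eqv.flip S)) (x0 := x0) (y0 := 0) (a := a) (b := -b)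
    (by simpa using h0) (by simpa using h1) (by simpa using h) (by omega)
  simpa using this

lemma Cvx.left {S : ℤ → ℤ → Prop} (c : Cvx S) {x0 a b : ℤ} (h0 : S 0 x0)
    (h1 : S 0 (x0 + 1)) (h : S a b) (hb : a < 0) : ∃ z, S (-1) z := by
  have := Cvx.up (c.of_eqv (Eqv.rot S)) (x0 := x0) (y0 := 0) (a := b) (b := -a)
    (by simpa using h0) (by simpa using h1) (by simpa using h) (by omega)
  simpa using this

/-- points on a horizontal segment -/
lemma Cvx.row {S : ℤ → ℤ → Prop} (c : Cvx S) {x1 x2 x y : ℤ} (h0 : S x1 y)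
    (h1 : S x2 y) (h : x1 ≤ x) (h' : x ≤ x2) : S x y := by
  rcases h.eq_or_lt with rfl | h
  · exact h0
  · refine c x1 y x2 y x1 y (x2 - x) (x - x1) 0 x y (by omega) (by omega) le_rfl (by omega)
      ?_ ?_ h0 h1 h0 <;> ring

lemma step_seg {S : ℤ → ℤ → Prop} {m a b : ℤ} (hm : 0 ≤ m)
    (hS : ∀ x y, S x y ↔ Seg m x y ∨ (x = a ∧ y = b)) (hv : ¬ Seg m a b) (c : Cvx S) :
    Good S := by
  unfold Seg at *
  have hvS : S a b := (hS a b).2 (Or.inr ⟨rfl, rfl⟩)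
  have h00 : S 0 0 := (hS 0 0).2 (Or.inl (by omega))
  rcases eq_or_ne b 0 with rfl | hb
  · left
    refine ⟨m + 1, by omega, ?_⟩
    rcases lt_or_ge a 0 with ha | ha
    · have := (hS _ _).1 (c.row hvS h00 (x := -1) (by omega) (by omega))
      refine ⟨1, 0, 1, 0, 1, 0, by norm_num, fun x y => ?_⟩
      rw [hS]; unfold Seg; omega
    · have := (hS _ _).1 (c.row h00 hvS (x := m + 1) (by omega) (by omega))
      refine ⟨1, 0, 0, 0, 1, 0, by norm_num, fun x y => ?_⟩
      rw [hS]; unfold Seg; omega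
  rcases eq_or_ne m 0 with rfl | hm0
  · left
    refine ⟨1, by norm_num, ?_⟩
    have hgpos : 0 < Int.gcd a b := Int.gcd_pos_of_ne_zero_right _ hb
    obtain ⟨a', ha'⟩ := Int.gcd_dvd_left a b
    obtain ⟨b', hb'⟩ := Int.gcd_dvd_right a b
    have hbez := Int.gcd_eq_gcd_ab a b
    set g : ℤ := (Int.gcd a b : ℤ) with hg
    have hgpos' : 0 < g := by rw [hg]; exact_mod_cast hgpos
    have hmem : S a' b' := by
      refine c 0 0 a b 0 0 (g - 1) 1 0 a' b' (by omega) (by omega) le_rfl (by omega) ?_ ?_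
        h00 hvS h00
      · linear_combination -ha'
      · linear_combination -hb'
    have hg1 : g = 1 := by
      rcases (hS _ _).1 hmem with h | h
      · exfalso; apply hb; rw [hb', h.1]; simp
      · have : b * (g - 1) = 0 := by
          have := h.2; rw [this] at hb'; linear_combination -hb'
        rcases mul_eq_zero.1 this with h | h
        · exact absurd h hb
        · omega
    rw [hg1] at hbez
    set u := Int.gcdA a b
    set w := Int.gcdB a b
    refine ⟨u, w, 0, -b, a, 0, Or.inl (by linear_combination -hbez), fun x y => ?_⟩
    rw [hS]; unfold Seg
    constructor
    · rintro (h | ⟨rfl, rfl⟩)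
      · have hx : x = 0 := by omega
        have hy : y = 0 := by omega
        subst hx; subst hy; simp
      · refine ⟨by ring, ?_, ?_⟩ <;> linarith
    · rintro ⟨h1, h2, h3⟩
      have ex : x = a * (u * x + w * y + 0) - w * (-b * x + a * y + 0) := by
        linear_combination x * hbez
      have ey : y = b * (u * x + w * y + 0) + u * (-b * x + a * y + 0) := by
        linear_combination y * hbez
      have : u * x + w * y + 0 = 0 ∨ u * x + w * y + 0 = 1 := by omega
      rw [h1] at ex ey
      rcases this with h | h <;> rw [h] at ex ey
      · left; omega
      · right; omega
  · right; left
    have h10 : S (0 + 1) 0 := (hS _ _).2 (Or.inl (by omega))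
    refine ⟨m, 0, by omega, le_rfl, hm, ?_⟩
    rcases lt_or_gt_of_ne hb with hb | hb
    · obtain ⟨z, hz⟩ := c.down h00 h10 hvS hb
      have : b = -1 := by have := (hS _ _).1 hz; omega
      subst this
      refine ⟨1, a, 0, 0, -1, 0, by norm_num, fun x y => ?_⟩
      rw [hS]; unfold Trap
      constructor
      · rintro (⟨rfl, h⟩ | ⟨rfl, rfl⟩)
        · left; simp; omega
        · right; simp
      · rintro (⟨h, h'⟩ | ⟨h, h'⟩)
        · have : y = 0 := by omega
          subst this; left; simp at h'; omega
        · have : y = -1 := by omega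
          subst this; right; omega
    · obtain ⟨z, hz⟩ := c.up h00 h10 hvS hb
      have : b = 1 := by have := (hS _ _).1 hz; omega
      subst this
      refine ⟨1, -a, 0, 0, 1, 0, by norm_num, fun x y => ?_⟩
      rw [hS]; unfold Trap
      constructor
      · rintro (⟨rfl, h⟩ | ⟨rfl, rfl⟩)
        · left; simp; omega
        · right; simp
      · rintro (⟨h, h'⟩ | ⟨h, h'⟩)
        · have : y = 0 := by omega
          subst this; left; simp at h'; omega
        · have : y = 1 := by omega
          subst this; right; omega

/-- A lattice point strictly inside a row with points above and below is excluded. -/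
lemma Sup.elim {S : ℤ → ℤ → Prop} (s : Sup S) {x y : ℤ} (h : S x y)
    (key : ∀ α β : ℝ, (∀ x' y' : ℤ, S x' y' → α * (x' - x) + β * (y' - y) ≤ 0) →
      α = 0 ∧ β = 0) : False := by
  obtain ⟨α, β, h0, hs⟩ := s x y h
  obtain ⟨rfl, rfl⟩ := key α β hs
  simp at h0

lemma cast_pos' {z : ℤ} (h : 0 < z) : (1 : ℝ) ≤ z := by exact_mod_cast h

lemma step_triI {S : ℤ → ℤ → Prop} {a b : ℤ}
    (hS : ∀ x y, S x y ↔ TriI x y ∨ (x = a ∧ y = b)) (hv : ¬ TriI a b) (c : Cvx S)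
    (s : Sup S) : False := by
  unfold TriI at *
  -- the case of a visible left edge
  have main : ∀ (a b : ℤ) (S : ℤ → ℤ → Prop),
      (∀ x y, S x y ↔ (0 ≤ x ∧ 0 ≤ y ∧ x + y ≤ 2) ∨ (x = a ∧ y = b)) → Cvx S → Sup S →
      a < 0 → False := by
    intro a b S hS c s ha
    have hvS : S a b := (hS a b).2 (Or.inr ⟨rfl, rfl⟩)
    have h00 : S 0 0 := (hS _ _).2 (Or.inl (by omega))
    have h01 : S 0 (0 + 1) := (hS _ _).2 (Or.inl (by omega))
    have h02 : S 0 2 := (hS _ _).2 (Or.inl (by omega))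
    have h10 : S 1 0 := (hS _ _).2 (Or.inl (by omega))
    obtain ⟨z, hz⟩ := c.left h00 h01 hvS ha
    have : a = -1 := by have := (hS _ _).1 hz; omega
    subst this
    refine s.elim h01 fun α β h => ?_
    have i1 := h _ _ h00
    have i2 := h _ _ h02
    have i3 := h _ _ h10
    have i4 := h _ _ hvS
    push_cast at i1 i2 i3 i4
    have hb : β = 0 := by linarith
    subst hb
    exact ⟨by linarith, rfl⟩
  rcases lt_or_ge a 0 with ha | ha
  · exact main a b S hS c s ha
  rcases lt_or_ge b 0 with hb | hb
  · have e : Eqv (fun x y => S y x) S := ⟨0, 1, 0, 1, 0, 0, by norm_num, fun x y => by simp⟩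
    refine main b a _ (fun x y => ?_) (c.of_eqv e) (s.of_eqv e) hb
    show S y x ↔ _
    rw [hS]; omega
  · have e : Eqv (fun x y => S (2 - x - y) y) S :=
      ⟨-1, -1, 2, 0, 1, 0, by norm_num, fun x y => by
        rw [show -1 * x + -1 * y + 2 = 2 - x - y by ring, show 0 * x + 1 * y + 0 = y by ring]⟩
    refine main (2 - a - b) b _ (fun x y => ?_) (c.of_eqv e) (s.of_eqv e) (by omega)
    show S (2 - x - y) y ↔ _
    rw [hS]; omega

lemma step_tri_left {S : ℤ → ℤ → Prop} {k a b : ℤ} (hk : 1 ≤ k) (ha : a < 0) (hb : 2 ≤ b)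
    (hS : ∀ x y, S x y ↔ Trap k 0 x y ∨ (x = a ∧ y = b)) (c : Cvx S)
    (s : Sup S) : Good S := by
  unfold Trap at *
  have hvS : S a b := (hS a b).2 (Or.inr ⟨rfl, rfl⟩)
  have h00 : S 0 0 := (hS _ _).2 (Or.inl (by omega))
  have h01 : S 0 (0 + 1) := (hS _ _).2 (Or.inl (by omega))
  have hk0 : S k 0 := (hS _ _).2 (Or.inl (by omega))
  obtain ⟨z, hz⟩ := c.left h00 h01 hvS ha
  have : a = -1 := by have := (hS _ _).1 hz; omega
  subst this
  have hcase : k = 1 ∧ b = 2 := by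
    by_contra hcon
    refine s.elim h01 fun α β h => ?_
    have i1 := h _ _ h00
    have i3 := h _ _ hk0
    have i4 := h _ _ hvS
    push_cast at i1 i3 i4
    have hbR : (2 : ℝ) ≤ b := by exact_mod_cast hb
    have hkR : (1 : ℝ) ≤ k := by exact_mod_cast hk
    have hβ : 0 ≤ β := by linarith
    have hα : β ≤ α := by nlinarith
    have : k ≥ 2 ∨ b ≥ 3 := by omega
    rcases this with h | h
    · have h : (2 : ℝ) ≤ k := by exact_mod_cast h
      have : α = 0 := by nlinarith
      exact ⟨this, by linarith⟩
    · have h : (3 : ℝ) ≤ b := by exact_mod_cast h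
      have : α ≤ β := by nlinarith
      have : β = 0 := by nlinarith
      exact ⟨by linarith, this⟩
  obtain ⟨rfl, rfl⟩ := hcase
  refine Or.inr (Or.inl ⟨2, 0, by norm_num, by norm_num, by norm_num, 2, 1, 0, -1, -1, 1,
    by norm_num, fun x y => ?_⟩)
  rw [hS]; unfold Trap; omega

lemma step_down {S : ℤ → ℤ → Prop} {k l a b : ℤ} (hk : 1 ≤ k) (hl : 0 ≤ l) (hlk : l ≤ k)
    (hb : b < 0)
    (hS : ∀ x y, S x y ↔ Trap k l x y ∨ (x = a ∧ y = b)) (c : Cvx S)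
    (s : Sup S) : Good S := by
  unfold Trap at *
  have hvS : S a b := (hS a b).2 (Or.inr ⟨rfl, rfl⟩)
  have h00 : S 0 0 := (hS _ _).2 (Or.inl (by omega))
  have h10 : S (0 + 1) 0 := (hS _ _).2 (Or.inl (by omega))
  have h01 : S 0 1 := (hS _ _).2 (Or.inl (by omega))
  have hl1 : S l 1 := (hS _ _).2 (Or.inl (by omega))
  obtain ⟨z, hz⟩ := c.down h00 h10 hvS hb
  have : b = -1 := by have := (hS _ _).1 hz; omega
  subst this
  have hk1 : k = 1 := by
    by_contra hcon
    have h20 : S 2 0 := (hS _ _).2 (Or.inl (by omega))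
    refine s.elim h10 fun α β h => ?_
    have i1 := h _ _ h00
    have i2 := h _ _ h20
    have i3 := h _ _ h01
    have i4 := h _ _ hvS
    push_cast at i1 i2 i3 i4
    have hb : α = 0 := by linarith
    subst hb
    exact ⟨rfl, by linarith⟩
  subst hk1
  have ha : 0 ≤ a := by
    by_contra hcon
    refine s.elim h00 fun α β h => ?_
    have i2 := h _ _ h10
    have i3 := h _ _ h01
    have i4 := h _ _ hvS
    push_cast at i2 i3 i4
    have : (a : ℝ) ≤ -1 := by exact_mod_cast (by omega : a ≤ -1)
    have h1 : α = 0 := by nlinarith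
    subst h1
    exact ⟨rfl, by linarith⟩
  have ha2 : a + l ≤ 2 := by
    by_contra hcon
    refine s.elim h10 fun α β h => ?_
    have i2 := h _ _ h00
    have i3 := h _ _ hl1
    have i4 := h _ _ hvS
    push_cast at i2 i3 i4
    have : (3 : ℝ) ≤ a + l := by exact_mod_cast (by omega : 3 ≤ a + l)
    have h1 : α = 0 := by nlinarith
    subst h1
    exact ⟨rfl, by linarith⟩
  have : (l = 0 ∧ a = 0) ∨ (l = 0 ∧ a = 1) ∨ (l = 0 ∧ a = 2) ∨ (l = 1 ∧ a = 0) ∨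
    (l = 1 ∧ a = 1) := by omega
  right; left
  rcases this with ⟨rfl, rfl⟩ | ⟨rfl, rfl⟩ | ⟨rfl, rfl⟩ | ⟨rfl, rfl⟩ | ⟨rfl, rfl⟩
  · refine ⟨2, 0, by norm_num, by norm_num, by norm_num, -1, -1, 1, 1, 0, 0,
      by norm_num, fun x y => ?_⟩
    rw [hS]; unfold Trap; omega
  · refine ⟨1, 1, by norm_num, by norm_num, by norm_num, 1, 0, 0, 1, 1, 0,
      by norm_num, fun x y => ?_⟩
    rw [hS]; unfold Trap; omega
  · refine ⟨2, 0, by norm_num, by norm_num, by norm_num, 1, 0, 0, -1, -1, 1,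
      by norm_num, fun x y => ?_⟩
    rw [hS]; unfold Trap; omega
  · refine ⟨2, 1, by norm_num, by norm_num, by norm_num, 0, -1, 1, 1, 0, 0,
      by norm_num, fun x y => ?_⟩
    rw [hS]; unfold Trap; omega
  · refine ⟨2, 1, by norm_num, by norm_num, by norm_num, 0, -1, 1, -1, 0, 1,
      by norm_num, fun x y => ?_⟩
    rw [hS]; unfold Trap; omega

lemma step_up {S : ℤ → ℤ → Prop} {k l a b : ℤ} (hl : 1 ≤ l) (hlk : l ≤ k)
    (hb : 2 ≤ b)
    (hS : ∀ x y, S x y ↔ Trap k l x y ∨ (x = a ∧ y = b)) (c : Cvx S)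
    (s : Sup S) : Good S := by
  unfold Trap at *
  have hvS : S a b := (hS a b).2 (Or.inr ⟨rfl, rfl⟩)
  have h00 : S 0 0 := (hS _ _).2 (Or.inl (by omega))
  have hk0 : S k 0 := (hS _ _).2 (Or.inl (by omega))
  have h01 : S 0 1 := (hS _ _).2 (Or.inl (by omega))
  have h11 : S (0 + 1) 1 := (hS _ _).2 (Or.inl (by omega))
  obtain ⟨z, hz⟩ := c.up h01 h11 hvS (by omega)
  have : b = 2 := by have := (hS _ _).1 hz; omega
  subst this
  have hl1 : l = 1 := by
    by_contra hcon
    have h21 : S 2 1 := (hS _ _).2 (Or.inl (by omega))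
    refine s.elim h11 fun α β h => ?_
    have i1 := h _ _ h01
    have i2 := h _ _ h21
    have i3 := h _ _ h00
    have i4 := h _ _ hvS
    push_cast at i1 i2 i3 i4
    have hb : α = 0 := by linarith
    subst hb
    exact ⟨rfl, by linarith⟩
  subst hl1
  have ha : 0 ≤ a := by
    by_contra hcon
    refine s.elim h01 fun α β h => ?_
    have i2 := h _ _ h11
    have i3 := h _ _ h00
    have i4 := h _ _ hvS
    push_cast at i2 i3 i4
    have : (a : ℝ) ≤ -1 := by exact_mod_cast (by omega : a ≤ -1)
    have h1 : α = 0 := by nlinarith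
    subst h1
    exact ⟨rfl, by linarith⟩
  have ha2 : a + k ≤ 2 := by
    by_contra hcon
    refine s.elim h11 fun α β h => ?_
    have i2 := h _ _ h01
    have i3 := h _ _ hk0
    have i4 := h _ _ hvS
    push_cast at i2 i3 i4
    have : (3 : ℝ) ≤ a + k := by exact_mod_cast (by omega : 3 ≤ a + k)
    have h1 : α = 0 := by nlinarith
    subst h1
    exact ⟨rfl, by linarith⟩
  have : (k = 1 ∧ a = 0) ∨ (k = 1 ∧ a = 1) ∨ (k = 2 ∧ a = 0) := by omega
  right
  rcases this with ⟨rfl, rfl⟩ | ⟨rfl, rfl⟩ | ⟨rfl, rfl⟩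
  · left
    refine ⟨2, 1, by norm_num, by norm_num, by norm_num, 0, 1, 0, 1, 0, 0,
      by norm_num, fun x y => ?_⟩
    rw [hS]; unfold Trap; omega
  · left
    refine ⟨2, 1, by norm_num, by norm_num, by norm_num, 0, 1, 0, -1, 0, 1,
      by norm_num, fun x y => ?_⟩
    rw [hS]; unfold Trap; omega
  · right
    refine ⟨1, 0, 0, 0, 1, 0, by norm_num, fun x y => ?_⟩
    rw [hS]; unfold TriI; omega

lemma step_trap {S : ℤ → ℤ → Prop} {k l a b : ℤ} (hk : 1 ≤ k) (hl : 0 ≤ l) (hlk : l ≤ k)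
    (hS : ∀ x y, S x y ↔ Trap k l x y ∨ (x = a ∧ y = b)) (hv : ¬ Trap k l a b) (c : Cvx S)
    (s : Sup S) : Good S := by
  have hvS : S a b := (hS a b).2 (Or.inr ⟨rfl, rfl⟩)
  have h00 : S 0 0 := (hS _ _).2 (Or.inl (by unfold Trap; omega))
  have h01 : S 0 1 := (hS _ _).2 (Or.inl (by unfold Trap; omega))
  rcases lt_or_ge b 0 with hb | hb
  · exact step_down hk hl hlk hb hS c s
  rcases eq_or_ne b 0 with rfl | hb0
  · unfold Trap at *
    right; left
    refine ⟨k + 1, l, by omega, by omega, by omega, ?_⟩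
    rcases lt_or_ge a 0 with ha | ha
    · have := (hS _ _).1 (c.row hvS h00 (x := -1) (by omega) (by omega))
      refine ⟨1, -1, 1, 0, 1, 0, by norm_num, fun x y => ?_⟩
      rw [hS]; unfold Trap; omega
    · have := (hS _ _).1 (c.row h00 hvS (x := k + 1) (by omega) (by omega))
      refine ⟨1, 0, 0, 0, 1, 0, by norm_num, fun x y => ?_⟩
      rw [hS]; unfold Trap; omega
  rcases eq_or_ne b 1 with rfl | hb1
  · unfold Trap at *
    right; left
    rcases lt_or_ge a 0 with ha | ha
    · have := (hS _ _).1 (c.row hvS h01 (x := -1) (by omega) (by omega))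
      rcases hlk.eq_or_lt with rfl | hlt
      · refine ⟨l + 1, l, by omega, by omega, by omega, 1, 1, 0, 0, -1, 1, by norm_num,
          fun x y => ?_⟩
        rw [hS]; unfold Trap; omega
      · refine ⟨k, l + 1, by omega, by omega, by omega, 1, 1, 0, 0, 1, 0, by norm_num,
          fun x y => ?_⟩
        rw [hS]; unfold Trap; omega
    · have := (hS _ _).1 (c.row h01 hvS (x := l + 1) (by omega) (by omega))
      rcases hlk.eq_or_lt with rfl | hlt
      · refine ⟨l + 1, l, by omega, by omega, by omega, 1, 0, 0, 0, -1, 1, by norm_num,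
          fun x y => ?_⟩
        rw [hS]; unfold Trap; omega
      · refine ⟨k, l + 1, by omega, by omega, by omega, 1, 0, 0, 0, 1, 0, by norm_num,
          fun x y => ?_⟩
        rw [hS]; unfold Trap; omega
  rcases eq_or_ne l 0 with rfl | hl0
  · rcases lt_or_ge a 0 with ha | ha
    · exact step_tri_left hk ha (by omega) hS c s
    · have e : Eqv (fun x y => S (k - x - k * y) y) S :=
        ⟨-1, -k, k, 0, 1, 0, by norm_num, fun x y => by
          rw [show -1 * x + -k * y + k = k - x - k * y by ring,
            show 0 * x + 1 * y + 0 = y by ring]⟩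
      refine Good.of_eqv e.symm ?_
      refine step_tri_left (a := k - a - k * b) (b := b) hk (by nlinarith [(by omega : 2 ≤ b)])
        (by omega) (fun x y => ?_) (c.of_eqv e) (s.of_eqv e)
      show S (k - x - k * y) y ↔ _
      rw [hS]; unfold Trap
      constructor
      · rintro ((⟨rfl, h⟩ | ⟨rfl, h⟩) | ⟨h, rfl⟩)
        · left; left; omega
        · left; right; omega
        · right; omega
      · rintro ((⟨rfl, h⟩ | ⟨rfl, h⟩) | ⟨h, rfl⟩)
        · left; left; omega
        · left; right; omega
        · right; omega
  · exact step_up (by omega) hlk (by omega) hS c s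

lemma step_all {S M : ℤ → ℤ → Prop} {a b : ℤ}
    (hS : ∀ x y, S x y ↔ M x y ∨ (x = a ∧ y = b)) (hv : ¬ M a b) (c : Cvx S)
    (s : Sup S) (g : Good M) : Good S := by
  -- transport along an equivalence
  have tr : ∀ N, Eqv M N → ∃ S' a' b', Eqv S S' ∧ (∀ x y, S' x y ↔ N x y ∨ (x = a' ∧ y = b')) ∧
      ¬ N a' b' := by
    intro N e
    obtain ⟨p', q', r', s', t', u', hd', h'⟩ := e.symm
    obtain ⟨p, q, r, s, t, u, hd, h⟩ := e
    refine ⟨fun x y => N x y ∨ (x = p * a + q * b + r ∧ y = s * a + t * b + u),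
      p * a + q * b + r, s * a + t * b + u, ⟨p, q, r, s, t, u, hd, fun x y => ?_⟩,
      fun x y => Iff.rfl, ?_⟩
    · rw [hS, h]
      refine or_congr Iff.rfl ⟨?_, ?_⟩
      · rintro ⟨rfl, rfl⟩; exact ⟨rfl, rfl⟩
      · rintro ⟨h1, h2⟩
        have e1 : (p * t - q * s) * (x - a) = 0 := by linear_combination t * h1 - q * h2
        have e2 : (p * t - q * s) * (y - b) = 0 := by linear_combination p * h2 - s * h1
        have hd0 : p * t - q * s ≠ 0 := by rcases hd with hd | hd <;> rw [hd] <;> norm_num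
        have := (mul_eq_zero.1 e1).resolve_left hd0
        have := (mul_eq_zero.1 e2).resolve_left hd0
        omega
    · rw [← h]; exact hv
  rcases g with ⟨m, hm, g⟩ | ⟨k, l, h1, h2, h3, g⟩ | g
  · obtain ⟨S', a', b', e, hS', hv'⟩ := tr _ g
    exact Good.of_eqv e (step_seg hm hS' hv' (c.of_eqv e.symm))
  · obtain ⟨S', a', b', e, hS', hv'⟩ := tr _ g
    exact Good.of_eqv e (step_trap h1 h2 h3 hS' hv' (c.of_eqv e.symm) (s.of_eqv e.symm))
  · obtain ⟨S', a', b', e, hS', hv'⟩ := tr _ g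
    exact (step_triI hS' hv' (c.of_eqv e.symm) (s.of_eqv e.symm)).elim

lemma good_of_finset (n : ℕ) : ∀ F : Finset (ℤ × ℤ), F.card = n + 1 →
    Cvx (fun x y => (x, y) ∈ F) → Sup (fun x y => (x, y) ∈ F) → Good (fun x y => (x, y) ∈ F) := by
  induction n with
  | zero =>
    intro F hF c s
    obtain ⟨⟨a, b⟩, rfl⟩ := Finset.card_eq_one.1 hF
    refine Or.inl ⟨0, le_rfl, 1, 0, -a, 0, 1, -b, by norm_num, fun x y => ?_⟩
    unfold Seg
    simp only [Finset.mem_singleton, Prod.mk.injEq]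
    omega
  | succ n ih =>
    intro F hF c s
    have hne : F.Nonempty := Finset.card_pos.1 (by omega)
    obtain ⟨v, hvF, hmax⟩ := Finset.exists_max_image F (fun z => toLex z) hne
    obtain ⟨a, b⟩ := v
    have hmax' : ∀ x y, (x, y) ∈ F → x < a ∨ (x = a ∧ y ≤ b) := by
      intro x y h
      have := hmax _ h
      simpa [Prod.Lex.toLex_le_toLex] using this
    have hmem : ∀ x y, (x, y) ∈ F.erase (a, b) ↔ (x, y) ∈ F ∧ ¬ (x = a ∧ y = b) := by
      intro x y
      rw [Finset.mem_erase, ne_eq, Prod.mk.injEq, and_comm]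
    refine step_all (M := fun x y => (x, y) ∈ F.erase (a, b)) (a := a) (b := b) ?_ ?_ c s
      (ih _ ?_ ?_ ?_)
    · intro x y
      simp only [hmem]
      constructor
      · intro h; by_cases h' : x = a ∧ y = b
        · exact Or.inr h'
        · exact Or.inl ⟨h, h'⟩
      · rintro (h | ⟨rfl, rfl⟩)
        · exact h.1
        · exact hvF
    · simp
    · rw [Finset.card_erase_of_mem hvF]; omega
    · intro x1 y1 x2 y2 x3 y3 n1 n2 n3 x y p1 p2 p3 p4 hx hy s1 s2 s3
      simp only [hmem] at s1 s2 s3 ⊢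
      refine ⟨c x1 y1 x2 y2 x3 y3 n1 n2 n3 x y p1 p2 p3 p4 hx hy s1.1 s2.1 s3.1, ?_⟩
      rintro ⟨rfl, rfl⟩
      have m1 := hmax' _ _ s1.1
      have m2 := hmax' _ _ s2.1
      have m3 := hmax' _ _ s3.1
      have q1 : 0 ≤ n1 * (x - x1) := mul_nonneg p1 (by omega)
      have q2 : 0 ≤ n2 * (x - x2) := mul_nonneg p2 (by omega)
      have q3 : 0 ≤ n3 * (x - x3) := mul_nonneg p3 (by omega)
      have hsum : n1 * (x - x1) + n2 * (x - x2) + n3 * (x - x3) = 0 := by linear_combination hx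
      have r1 : n1 = 0 ∨ x - x1 = 0 := mul_eq_zero.1 (by omega)
      have r2 : n2 = 0 ∨ x - x2 = 0 := mul_eq_zero.1 (by omega)
      have r3 : n3 = 0 ∨ x - x3 = 0 := mul_eq_zero.1 (by omega)
      have t : ∀ m w z : ℤ, 0 ≤ m → (w < x ∨ w = x ∧ z ≤ y) → ¬ (w = x ∧ z = y) →
          (m = 0 ∨ x - w = 0) → m ≤ m * (y - z) := by
        intro m w z hm h1 h2 h3
        rcases h3 with rfl | h3
        · simp
        · nlinarith [(by omega : 1 ≤ y - z)]
      have t1 := t _ _ _ p1 m1 s1.2 r1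
      have t2 := t _ _ _ p2 m2 s2.2 r2
      have t3 := t _ _ _ p3 m3 s3.2 r3
      linarith
    · intro x y h
      obtain ⟨α, β, h0, h1⟩ := s x y ((hmem _ _).1 h).1
      exact ⟨α, β, h0, fun x' y' h' => h1 x' y' ((hmem _ _).1 h').1⟩

/-! ### Inequivalence of the models -/

lemma trap_le {k l k' l' : ℤ} (hl : l ≤ k) (hk' : 2 ≤ k') (e : Eqv (Trap k' l') (Trap k l)) :
    k' ≤ k := by
  obtain ⟨p, q, r, s, t, u, hd, h⟩ := e
  unfold Trap at h
  have h0 := (h 0 0).1 (by omega)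
  have h1 := (h 1 0).1 (by omega)
  have h2 := (h 2 0).1 (by omega)
  have h3 := (h k' 0).1 (by omega)
  have hs : s = 0 := by omega
  subst hs
  have hp : p = 1 ∨ p = -1 := by
    have : IsUnit p := by
      rcases hd with hd | hd
      · exact IsUnit.of_mul_eq_one t (by linarith)
      · exact IsUnit.of_mul_eq_one (-t) (by linarith)
    exact Int.isUnit_iff.1 this
  rcases hp with rfl | rfl <;> omega

lemma not_eqv_triI {k l : ℤ} (e : Eqv TriI (Trap k l)) : False := by
  obtain ⟨p, q, r, s, t, u, hd, h⟩ := e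
  unfold Trap TriI at h
  have h0 := (h 0 0).1 (by omega)
  have h1 := (h 1 0).1 (by omega)
  have h2 := (h 2 0).1 (by omega)
  have h3 := (h 0 1).1 (by omega)
  have h4 := (h 0 2).1 (by omega)
  have hs : s = 0 := by omega
  have ht : t = 0 := by omega
  subst hs; subst ht
  simp at hd

/-! ### Bridge to real geometry -/

def lat (P : Set (Fin 2 → ℝ)) (x y : ℤ) : Prop := toR2 ![x, y] ∈ P

lemma toR2_mk (x y : ℤ) : toR2 ![x, y] = ![(x : ℝ), (y : ℝ)] := by
  ext i; fin_cases i <;> simp [toR2]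

lemma toR2_eta (q : Fin 2 → ℤ) : toR2 q = toR2 ![q 0, q 1] := by
  ext i; fin_cases i <;> simp [toR2]

lemma unimodMap_apply (A : Matrix (Fin 2) (Fin 2) ℤ) (b : Fin 2 → ℤ) (x : Fin 2 → ℝ) :
    unimodMap A b x = ![(A 0 0 : ℝ) * x 0 + A 0 1 * x 1 + b 0,
      (A 1 0 : ℝ) * x 0 + A 1 1 * x 1 + b 1] := by
  ext i
  fin_cases i <;>
  simp [unimodMap, toR2, Matrix.mulVec, dotProduct, Fin.sum_univ_two]

lemma unimodMap_toR2 (A : Matrix (Fin 2) (Fin 2) ℤ) (b : Fin 2 → ℤ) (x y : ℤ) :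
    unimodMap A b (toR2 ![x, y]) =
      toR2 ![A 0 0 * x + A 0 1 * y + b 0, A 1 0 * x + A 1 1 * y + b 1] := by
  rw [unimodMap_apply, toR2_mk, toR2_mk]; simp

lemma det_cases {A : Matrix (Fin 2) (Fin 2) ℤ} (h : IsUnit A.det) :
    A 0 0 * A 1 1 - A 0 1 * A 1 0 = 1 ∨ A 0 0 * A 1 1 - A 0 1 * A 1 0 = -1 := by
  rw [Matrix.det_fin_two] at h
  exact Int.isUnit_iff.1 h

lemma unimodMap_injective {A : Matrix (Fin 2) (Fin 2) ℤ} (h : IsUnit A.det) (b : Fin 2 → ℤ) :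
    Function.Injective (unimodMap A b) := by
  intro x y hxy
  rw [unimodMap_apply, unimodMap_apply] at hxy
  have h0 := congrFun hxy 0
  have h1 := congrFun hxy 1
  simp at h0 h1
  have hd : ((A 0 0 : ℝ) * A 1 1 - A 0 1 * A 1 0) ≠ 0 := by
    rcases det_cases h with h | h
    · have : ((A 0 0 : ℝ) * A 1 1 - A 0 1 * A 1 0) = 1 := by exact_mod_cast h
      rw [this]; norm_num
    · have : ((A 0 0 : ℝ) * A 1 1 - A 0 1 * A 1 0) = -1 := by exact_mod_cast h
      rw [this]; norm_num
  have e0 : ((A 0 0 : ℝ) * A 1 1 - A 0 1 * A 1 0) * (x 0 - y 0) = 0 := by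
    linear_combination (A 1 1 : ℝ) * h0 - (A 0 1 : ℝ) * h1
  have e1 : ((A 0 0 : ℝ) * A 1 1 - A 0 1 * A 1 0) * (x 1 - y 1) = 0 := by
    linear_combination (A 0 0 : ℝ) * h1 - (A 1 0 : ℝ) * h0
  have f0 := (mul_eq_zero.1 e0).resolve_left hd
  have f1 := (mul_eq_zero.1 e1).resolve_left hd
  ext i; fin_cases i
  · simpa [sub_eq_zero] using f0
  · simpa [sub_eq_zero] using f1

lemma eqv_of_unimodEquiv {P M : Set (Fin 2 → ℝ)} (h : UnimodEquiv P M) :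
    Eqv (lat P) (lat M) := by
  obtain ⟨A, b, hA, rfl⟩ := h
  refine ⟨A 0 0, A 0 1, b 0, A 1 0, A 1 1, b 1, det_cases hA, fun x y => ?_⟩
  unfold lat
  rw [← unimodMap_toR2, (unimodMap_injective hA b).mem_set_image]

lemma surj_int {p q r s t u : ℤ} (hd : p * t - q * s = 1 ∨ p * t - q * s = -1) (X Y : ℤ) :
    ∃ x y, p * x + q * y + r = X ∧ s * x + t * y + u = Y := by
  rcases hd with hd | hd
  · refine ⟨t * (X - r) - q * (Y - u), p * (Y - u) - s * (X - r), ?_, ?_⟩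
    · linear_combination (X - r) * hd
    · linear_combination (Y - u) * hd
  · refine ⟨-(t * (X - r) - q * (Y - u)), -(p * (Y - u) - s * (X - r)), ?_, ?_⟩
    · linear_combination -(X - r) * hd
    · linear_combination -(Y - u) * hd

lemma inj_int {p q r s t u : ℤ} (hd : p * t - q * s = 1 ∨ p * t - q * s = -1) {x y a b : ℤ}
    (h1 : p * x + q * y + r = p * a + q * b + r) (h2 : s * x + t * y + u = s * a + t * b + u) :
    x = a ∧ y = b := by
  have e1 : (p * t - q * s) * (x - a) = 0 := by linear_combination t * h1 - q * h2
  have e2 : (p * t - q * s) * (y - b) = 0 := by linear_combination p * h2 - s * h1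
  have hd0 : p * t - q * s ≠ 0 := by rcases hd with hd | hd <;> rw [hd] <;> norm_num
  have := (mul_eq_zero.1 e1).resolve_left hd0
  have := (mul_eq_zero.1 e2).resolve_left hd0
  omega

lemma hull_lat {P : Set (Fin 2 → ℝ)} (hP : IsConvexLatticePolytope P) :
    P = convexHull ℝ {z | ∃ x y, lat P x y ∧ toR2 ![x, y] = z} := by
  obtain ⟨S, -, hS⟩ := hP
  have hc : Convex ℝ P := by rw [hS]; exact convex_convexHull _ _
  apply Set.Subset.antisymm
  · conv_lhs => rw [hS]
    apply convexHull_mono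
    rintro _ ⟨q, hq, rfl⟩
    refine ⟨q 0, q 1, ?_, (toR2_eta q).symm⟩
    unfold lat
    rw [← toR2_eta, hS]
    exact subset_convexHull _ _ ⟨q, hq, rfl⟩
  · apply convexHull_min _ hc
    rintro _ ⟨x, y, h, rfl⟩
    exact h

lemma image_hull (A : Matrix (Fin 2) (Fin 2) ℤ) (b : Fin 2 → ℤ) (s : Set (Fin 2 → ℝ)) :
    unimodMap A b '' convexHull ℝ s = convexHull ℝ (unimodMap A b '' s) := by
  have h := AffineMap.image_convexHull
    ((Matrix.mulVecLin (A.map (Int.cast : ℤ → ℝ))).toAffineMap +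
      AffineMap.const ℝ (Fin 2 → ℝ) (toR2 b)) s
  exact h

lemma unimodEquiv_of_eqv {P M : Set (Fin 2 → ℝ)} (hP : IsConvexLatticePolytope P)
    (hM : IsConvexLatticePolytope M) (h : Eqv (lat P) (lat M)) : UnimodEquiv P M := by
  obtain ⟨p, q, r, s, t, u, hd, h⟩ := h
  refine ⟨!![p, q; s, t], ![r, u], ?_, ?_⟩
  · rw [Matrix.det_fin_two]
    simpa [Int.isUnit_iff] using hd
  · rw [hull_lat hP, image_hull]
    conv_rhs => rw [hull_lat hM]
    congr 1
    ext z
    constructor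
    · rintro ⟨_, ⟨x, y, hxy, rfl⟩, rfl⟩
      refine ⟨_, _, (h x y).1 hxy, ?_⟩
      rw [unimodMap_toR2]; simp
    · rintro ⟨X, Y, hXY, rfl⟩
      obtain ⟨x, y, rfl, rfl⟩ := surj_int (r := r) (u := u) hd X Y
      refine ⟨_, ⟨x, y, (h x y).2 hXY, rfl⟩, ?_⟩
      rw [unimodMap_toR2]; simp

lemma Eqv.ncard_eq {S T : ℤ → ℤ → Prop} (h : Eqv S T) :
    {z : ℤ × ℤ | S z.1 z.2}.ncard = {z : ℤ × ℤ | T z.1 z.2}.ncard := by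
  obtain ⟨p, q, r, s, t, u, hd, h⟩ := h
  refine Set.ncard_congr (fun z _ => (p * z.1 + q * z.2 + r, s * z.1 + t * z.2 + u))
    (fun z hz => (h _ _).1 hz) ?_ ?_
  · rintro ⟨x, y⟩ ⟨a, b⟩ _ _ hh
    simp only [Prod.mk.injEq] at hh ⊢
    exact inj_int hd hh.1 hh.2
  · rintro ⟨X, Y⟩ hXY
    obtain ⟨x, y, h1, h2⟩ := surj_int (r := r) (u := u) hd X Y
    refine ⟨(x, y), ?_, by simp [h1, h2]⟩
    simp only [Set.mem_setOf_eq] at hXY ⊢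
    rw [h, h1, h2]; exact hXY

lemma ncard_lat (P : Set (Fin 2 → ℝ)) :
    {q : Fin 2 → ℤ | toR2 q ∈ P}.ncard = {z : ℤ × ℤ | lat P z.1 z.2}.ncard := by
  refine Set.ncard_congr (fun q _ => (q 0, q 1)) ?_ ?_ ?_
  · intro q hq
    simp only [Set.mem_setOf_eq] at hq ⊢
    unfold lat; rw [← toR2_eta]; exact hq
  · intro a b _ _ h
    simp only [Prod.mk.injEq] at h
    ext i; fin_cases i
    · exact h.1
    · exact h.2
  · rintro ⟨x, y⟩ h
    exact ⟨![x, y], h, by simp⟩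

lemma ncard_trap (k l : ℕ) : {z : ℤ × ℤ | Trap k l z.1 z.2}.ncard = k + l + 2 := by
  have : {z : ℤ × ℤ | Trap k l z.1 z.2} =
      ((Finset.Icc (0 : ℤ) k ×ˢ {0} ∪ Finset.Icc (0 : ℤ) l ×ˢ {1} : Finset (ℤ × ℤ)) :
        Set (ℤ × ℤ)) := by
    ext ⟨x, y⟩
    simp only [Trap, Set.mem_setOf_eq, Finset.coe_union, Set.mem_union, Finset.mem_coe,
      Finset.mem_product, Finset.mem_Icc, Finset.mem_singleton]
    omega
  rw [this, Set.ncard_coe_finset, Finset.card_union_of_disjoint]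
  · simp only [Finset.card_product, Int.card_Icc, Finset.card_singleton]
    omega
  · rw [Finset.disjoint_left]
    rintro ⟨x, y⟩ h h'
    simp only [Finset.mem_product, Finset.mem_singleton] at h h'
    omega

lemma ncard_triI : {z : ℤ × ℤ | TriI z.1 z.2}.ncard = 6 := by
  have : {z : ℤ × ℤ | TriI z.1 z.2} =
      (({(0, 0), (1, 0), (2, 0), (0, 1), (1, 1), (0, 2)} : Finset (ℤ × ℤ)) :
        Set (ℤ × ℤ)) := by
    ext ⟨x, y⟩
    simp only [TriI, Set.mem_setOf_eq, Finset.mem_coe, Finset.mem_insert, Finset.mem_singleton,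
      Prod.mk.injEq]
    omega
  rw [this, Set.ncard_coe_finset]
  rfl

lemma poly_quad (k l : ℕ) : IsConvexLatticePolytope (modelQuad k l) := by
  refine ⟨{![0, 0], ![(k : ℤ), 0], ![(l : ℤ), 1], ![0, 1]}, by simp, ?_⟩
  simp [modelQuad, Set.image_insert_eq, toR2_mk]

lemma poly_I : IsConvexLatticePolytope modelI := by
  refine ⟨{![0, 0], ![2, 0], ![0, 2]}, by simp, ?_⟩
  simp [modelI, Set.image_insert_eq, toR2_mk]

lemma convex_half (a b c : ℝ) : Convex ℝ {z : Fin 2 → ℝ | a * z 0 + b * z 1 ≤ c} := by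
  intro x hx y hy s t hs ht hst
  simp only [Set.mem_setOf_eq, Pi.add_apply, Pi.smul_apply, smul_eq_mul] at *
  have : c = s * c + t * c := by rw [← add_mul, hst, one_mul]
  nlinarith [mul_le_mul_of_nonneg_left hx hs, mul_le_mul_of_nonneg_left hy ht]

lemma row_mem {P : Set (Fin 2 → ℝ)} (hP : Convex ℝ P) {k x c : ℝ} (h0 : ![0, c] ∈ P)
    (hk : ![k, c] ∈ P) (hx : 0 ≤ x) (hxk : x ≤ k) : ![x, c] ∈ P := by
  rcases hx.eq_or_lt with rfl | hx
  · exact h0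
  have hkp : 0 < k := by linarith
  have := hP h0 hk (a := 1 - x / k) (b := x / k)
    (by rw [sub_nonneg, div_le_one hkp]; exact hxk) (by positivity) (by ring)
  convert this using 1
  ext i; fin_cases i
  · simp; field_simp
  · simp; ring

lemma lat_quad {k l : ℕ} (hlk : l ≤ k) (x y : ℤ) : lat (modelQuad k l) x y ↔ Trap k l x y := by
  unfold lat
  rw [toR2_mk]
  have hlk' : (l : ℝ) ≤ k := by exact_mod_cast hlk
  constructor
  · intro h
    have half : ∀ a b c : ℝ, 0 ≤ c → a * k ≤ c → a * l + b ≤ c → b ≤ c →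
        a * x + b * y ≤ c := by
      intro a b c h1 h2 h3 h4
      have : modelQuad k l ⊆ {z : Fin 2 → ℝ | a * z 0 + b * z 1 ≤ c} := by
        refine convexHull_min ?_ (convex_half a b c)
        rintro z (rfl | rfl | rfl | rfl) <;> simp <;> linarith
      simpa using this h
    have h1 := half (-1) 0 0 (by norm_num) (by simp) (by simp) (by norm_num)
    have h2 := half 0 (-1) 0 (by norm_num) (by simp) (by simp) (by norm_num)
    have h3 := half 0 1 1 (by norm_num) (by simp) (by simp) (by norm_num)
    have h4 := half 1 (k - l) k (by simp) (by simp) (by simp) (by simp)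
    have h1' : 0 ≤ x := by
      have : (0 : ℝ) ≤ x := by linarith
      exact_mod_cast this
    have h2' : 0 ≤ y := by
      have : (0 : ℝ) ≤ y := by linarith
      exact_mod_cast this
    have h3' : y ≤ 1 := by
      have : (y : ℝ) ≤ 1 := by linarith
      exact_mod_cast this
    have h4' : x + (k - l) * y ≤ k := by
      have : (x : ℝ) + (k - l) * y ≤ k := by linarith
      exact_mod_cast this
    unfold Trap
    have : y = 0 ∨ y = 1 := by omega
    rcases this with rfl | rfl
    · left; omega
    · right; omega
  · have hc : Convex ℝ (modelQuad k l) := convex_convexHull _ _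
    have m0 : ![0, 0] ∈ modelQuad k l := subset_convexHull _ _ (by simp)
    have m1 : ![(k : ℝ), 0] ∈ modelQuad k l := subset_convexHull _ _ (by simp)
    have m2 : ![(l : ℝ), 1] ∈ modelQuad k l := subset_convexHull _ _ (by simp)
    have m3 : ![0, 1] ∈ modelQuad k l := subset_convexHull _ _ (by simp)
    rintro (⟨rfl, h1, h2⟩ | ⟨rfl, h1, h2⟩)
    · have := row_mem hc m0 m1 (x := x) (by exact_mod_cast h1) (by exact_mod_cast h2)
      simpa using this
    · have := row_mem hc m3 m2 (x := x) (by exact_mod_cast h1) (by exact_mod_cast h2)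
      simpa using this

lemma lat_I (x y : ℤ) : lat modelI x y ↔ TriI x y := by
  unfold lat
  rw [toR2_mk]
  constructor
  · intro h
    have half : ∀ a b c : ℝ, 0 ≤ c → a * 2 ≤ c → b * 2 ≤ c →
        a * x + b * y ≤ c := by
      intro a b c h1 h2 h3
      have : modelI ⊆ {z : Fin 2 → ℝ | a * z 0 + b * z 1 ≤ c} := by
        refine convexHull_min ?_ (convex_half a b c)
        rintro z (rfl | rfl | rfl) <;> simp <;> linarith
      simpa using this h
    have h1 := half (-1) 0 0 (by norm_num) (by norm_num) (by norm_num)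
    have h2 := half 0 (-1) 0 (by norm_num) (by norm_num) (by norm_num)
    have h3 := half 1 1 2 (by norm_num) (by norm_num) (by norm_num)
    refine ⟨?_, ?_, ?_⟩
    · have : (0 : ℝ) ≤ x := by linarith
      exact_mod_cast this
    · have : (0 : ℝ) ≤ y := by linarith
      exact_mod_cast this
    · have : (x : ℝ) + y ≤ 2 := by linarith
      exact_mod_cast this
  · have hc : Convex ℝ modelI := convex_convexHull _ _
    have m0 : ![0, 0] ∈ modelI := subset_convexHull _ _ (by simp)
    have m1 : ![2, 0] ∈ modelI := subset_convexHull _ _ (by simp)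
    have m2 : ![0, 2] ∈ modelI := subset_convexHull _ _ (by simp)
    have mid : ∀ u v : Fin 2 → ℝ, u ∈ modelI → v ∈ modelI →
        ![(u 0 + v 0) / 2, (u 1 + v 1) / 2] ∈ modelI := by
      intro u v hu hv
      have := hc hu hv (a := 1 / 2) (b := 1 / 2) (by norm_num) (by norm_num) (by norm_num)
      convert this using 1
      ext i; fin_cases i <;> simp <;> ring
    rintro ⟨h1, h2, h3⟩
    have : (x = 0 ∧ y = 0) ∨ (x = 1 ∧ y = 0) ∨ (x = 2 ∧ y = 0) ∨ (x = 0 ∧ y = 1) ∨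
      (x = 1 ∧ y = 1) ∨ (x = 0 ∧ y = 2) := by omega
    rcases this with ⟨rfl, rfl⟩ | ⟨rfl, rfl⟩ | ⟨rfl, rfl⟩ | ⟨rfl, rfl⟩ | ⟨rfl, rfl⟩ | ⟨rfl, rfl⟩
    · simpa using m0
    · simpa using mid _ _ m0 m1
    · simpa using m1
    · simpa using mid _ _ m0 m2
    · simpa using mid _ _ m1 m2
    · simpa using m2

lemma Eqv.of_iff {S T : ℤ → ℤ → Prop} (h : ∀ x y, S x y ↔ T x y) : Eqv S T :=
  ⟨1, 0, 0, 0, 1, 0, by norm_num, fun x y => by simpa using h x y⟩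

lemma cvx_lat {P : Set (Fin 2 → ℝ)} (hc : Convex ℝ P) : Cvx (lat P) := by
  intro x1 y1 x2 y2 x3 y3 n1 n2 n3 x y p1 p2 p3 p4 hx hy s1 s2 s3
  unfold lat at *
  rw [toR2_mk] at *
  have q1 : (0 : ℝ) ≤ n1 := by exact_mod_cast p1
  have q2 : (0 : ℝ) ≤ n2 := by exact_mod_cast p2
  have q3 : (0 : ℝ) ≤ n3 := by exact_mod_cast p3
  have q4 : (0 : ℝ) < n1 + n2 + n3 := by exact_mod_cast p4
  have hx' : ((n1 : ℝ) + n2 + n3) * x = n1 * x1 + n2 * x2 + n3 * x3 := by exact_mod_cast hx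
  have hy' : ((n1 : ℝ) + n2 + n3) * y = n1 * y1 + n2 * y2 + n3 * y3 := by exact_mod_cast hy
  set N : ℝ := (n1 : ℝ) + n2 + n3 with hN
  have := hc.sum_mem (t := Finset.univ) (w := ![(n1 : ℝ) / N, n2 / N, n3 / N])
    (z := ![![(x1 : ℝ), (y1 : ℝ)], ![(x2 : ℝ), (y2 : ℝ)], ![(x3 : ℝ), (y3 : ℝ)]])
    (by intro i _; fin_cases i <;> simp <;> positivity)
    (by simp [Fin.sum_univ_three]; field_simp; exact hN.symm)
    (by intro i _; fin_cases i <;> simp <;> assumption)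
  convert this using 1
  ext i; fin_cases i
  · simp [Fin.sum_univ_three]; field_simp; linarith
  · simp [Fin.sum_univ_three]; field_simp; linarith

lemma sup_lat {P : Set (Fin 2 → ℝ)} (hc : Convex ℝ P) (h2 : ¬ Collinear ℝ P)
    (hint : ∀ q : Fin 2 → ℤ, toR2 q ∉ interior P) : Sup (lat P) := by
  have hne : (interior P).Nonempty := by
    rw [hc.interior_nonempty_iff_affineSpan_eq_top]
    have hPne : P.Nonempty := by
      by_contra h
      rw [Set.not_nonempty_iff_eq_empty] at h
      rw [h] at h2
      exact h2 (collinear_empty _ _)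
    rw [AffineSubspace.affineSpan_eq_top_iff_vectorSpan_eq_top_of_nonempty _ _ _ hPne]
    rw [collinear_iff_finrank_le_one] at h2
    apply Submodule.eq_top_of_finrank_eq
    have := Submodule.finrank_le (vectorSpan ℝ P)
    have h3 : Module.finrank ℝ (Fin 2 → ℝ) = 2 := by simp
    omega
  intro x y hxy
  obtain ⟨f, hf⟩ := geometric_hahn_banach_open_point hc.interior isOpen_interior (hint ![x, y])
  have hle : ∀ z ∈ P, f z ≤ f (toR2 ![x, y]) := by
    intro z hz
    have hz' : z ∈ closure (interior P) := by
      rw [hc.closure_interior_eq_closure_of_nonempty_interior hne]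
      exact subset_closure hz
    exact closure_minimal (fun a ha => (hf a ha).le)
      (isClosed_le f.continuous continuous_const) hz'
  have hrep : ∀ z : Fin 2 → ℝ, f z = f ![1, 0] * z 0 + f ![0, 1] * z 1 := by
    intro z
    have : z = z 0 • ![1, 0] + z 1 • ![0, 1] := by
      ext i; fin_cases i <;> simp
    conv_lhs => rw [this]
    rw [map_add, map_smul, map_smul, smul_eq_mul, smul_eq_mul]; ring
  refine ⟨f ![1, 0], f ![0, 1], ?_, ?_⟩
  · by_contra hcon
    push Not at hcon
    obtain ⟨z, hz⟩ := hne
    have := hf z hz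
    rw [hrep, hrep (toR2 _), hcon.1, hcon.2] at this
    simp at this
  · intro x' y' h'
    have := hle _ h'
    rw [hrep, hrep (toR2 ![x, y]), toR2_mk, toR2_mk] at this
    simp at this
    linarith

lemma finite_lat {P : Set (Fin 2 → ℝ)} (hP : IsConvexLatticePolytope P) :
    {z : ℤ × ℤ | lat P z.1 z.2}.Finite := by
  obtain ⟨S, -, hS⟩ := hP
  have hb : Bornology.IsBounded P := by
    rw [hS, isBounded_convexHull]
    exact (S.finite_toSet.image _).isBounded
  obtain ⟨R, hR⟩ := hb.subset_closedBall 0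
  refine (Set.finite_Icc ((-⌈R⌉, -⌈R⌉) : ℤ × ℤ) (⌈R⌉, ⌈R⌉)).subset ?_
  rintro ⟨x, y⟩ h
  have h1 := hR h
  rw [mem_closedBall_zero_iff, toR2_mk] at h1
  have hR' := Int.le_ceil R
  have hx : |(x : ℝ)| ≤ ⌈R⌉ := by
    have := norm_le_pi_norm ![(x : ℝ), (y : ℝ)] 0
    simp only [Matrix.cons_val_zero, Real.norm_eq_abs] at this
    linarith
  have hy : |(y : ℝ)| ≤ ⌈R⌉ := by
    have := norm_le_pi_norm ![(x : ℝ), (y : ℝ)] 1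
    simp only [Matrix.cons_val_one, Real.norm_eq_abs] at this
    simp at this
    linarith
  rw [abs_le] at hx hy
  have a1 : -⌈R⌉ ≤ x := by exact_mod_cast hx.1
  have a2 : x ≤ ⌈R⌉ := by exact_mod_cast hx.2
  have a3 : -⌈R⌉ ≤ y := by exact_mod_cast hy.1
  have a4 : y ≤ ⌈R⌉ := by exact_mod_cast hy.2
  exact ⟨⟨a1, a3⟩, ⟨a2, a4⟩⟩

lemma not_seg {P : Set (Fin 2 → ℝ)} (hP : IsConvexLatticePolytope P) (h2 : ¬ Collinear ℝ P)
    {m : ℤ} (e : Eqv (lat P) (Seg m)) : False := by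
  apply h2
  obtain ⟨p, q, r, s, t, u, hd, h⟩ := e
  have hsub : ∀ z ∈ P, (s : ℝ) * z 0 + t * z 1 = -u := by
    intro z hz
    have c1 : P ⊆ {z : Fin 2 → ℝ | s * z 0 + t * z 1 ≤ -u} := by
      rw [hull_lat hP]
      refine convexHull_min ?_ (convex_half _ _ _)
      rintro _ ⟨x, y, hxy, rfl⟩
      have := ((h x y).1 hxy).1
      have : (s : ℝ) * x + t * y + u = 0 := by exact_mod_cast this
      rw [toR2_mk]; simp; linarith
    have c2 : P ⊆ {z : Fin 2 → ℝ | (-s) * z 0 + (-t) * z 1 ≤ u} := by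
      rw [hull_lat hP]
      refine convexHull_min ?_ (convex_half _ _ _)
      rintro _ ⟨x, y, hxy, rfl⟩
      have := ((h x y).1 hxy).1
      have : (s : ℝ) * x + t * y + u = 0 := by exact_mod_cast this
      rw [toR2_mk]; simp; linarith
    have d1 := c1 hz
    have d2 := c2 hz
    simp only [Set.mem_setOf_eq] at d1 d2
    linarith
  rcases P.eq_empty_or_nonempty with rfl | ⟨z0, hz0⟩
  · exact collinear_empty _ _
  rw [collinear_iff_of_mem hz0]
  refine ⟨![(t : ℝ), -s], fun z hz => ?_⟩
  have k0 := hsub _ hz0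
  have k1 := hsub _ hz
  obtain ⟨e, he, hd⟩ : ∃ e : ℝ, e * e = 1 ∧ (p : ℝ) * t - q * s = e := by
    rcases hd with hd | hd
    · exact ⟨1, by norm_num, by exact_mod_cast hd⟩
    · exact ⟨-1, by norm_num, by exact_mod_cast hd⟩
  refine ⟨e * (p * (z 0 - z0 0) + q * (z 1 - z0 1)), ?_⟩
  ext i; fin_cases i
  · simp
    linear_combination -e * q * (k1 - k0) - e * (z 0 - z0 0) * hd - (z 0 - z0 0) * he
  · simp
    linear_combination e * p * (k1 - k0) - e * (z 1 - z0 1) * hd - (z 1 - z0 1) * he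

lemma modelTriangle_eq (k : ℕ) : modelTriangle (k + 2) = modelQuad k 0 := by
  simp [modelTriangle, modelQuad]

lemma mem_models {n : ℕ} (hn : 3 ≤ n) (M : Set (Fin 2 → ℝ)) : M ∈ modelPolytopes n ↔
    (∃ k l : ℕ, 1 ≤ k ∧ l ≤ k ∧ k + l + 2 = n ∧ M = modelQuad k l) ∨ (n = 6 ∧ M = modelI) := by
  unfold modelPolytopes
  simp only [Set.mem_setOf_eq]
  obtain ⟨m, rfl⟩ : ∃ m, n = m + 2 := ⟨n - 2, by omega⟩
  rw [modelTriangle_eq]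
  constructor
  · rintro (rfl | ⟨k, l, h1, h2, h3, rfl⟩ | h)
    · exact Or.inl ⟨m, 0, by omega, by omega, by omega, rfl⟩
    · exact Or.inl ⟨k, l, by omega, by omega, by omega, rfl⟩
    · exact Or.inr h
  · rintro (⟨k, l, h1, h2, h3, rfl⟩ | h)
    · rcases Nat.eq_zero_or_pos l with rfl | hl
      · left; congr 1; omega
      · exact Or.inr (Or.inl ⟨k, l, hl, h2, by omega, rfl⟩)
    · exact Or.inr (Or.inr h)

lemma models_unique {n : ℕ} (hn : 3 ≤ n) {M N : Set (Fin 2 → ℝ)} (hM : M ∈ modelPolytopes n)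
    (hN : N ∈ modelPolytopes n) (e : Eqv (lat M) (lat N)) : M = N := by
  rw [mem_models hn] at hM hN
  rcases hM with ⟨k, l, h1, h2, h3, rfl⟩ | ⟨hM, rfl⟩ <;>
  rcases hN with ⟨k', l', h1', h2', h3', rfl⟩ | ⟨hN, rfl⟩
  · have e' : Eqv (Trap k l) (Trap k' l') :=
      (Eqv.of_iff (lat_quad h2)).symm.trans (e.trans (Eqv.of_iff (lat_quad h2')))
    have hk : k = k' := by
      rcases lt_trichotomy k k' with h | h | h
      · have := trap_le (by omega) (by omega) e'.symm
        omega
      · exact h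
      · have := trap_le (by omega) (by omega) e'
        omega
    subst hk
    have : l = l' := by omega
    rw [this]
  · exact (not_eqv_triI ((Eqv.of_iff lat_I).symm.trans
      (e.symm.trans (Eqv.of_iff (lat_quad h2))))).elim
  · exact (not_eqv_triI ((Eqv.of_iff lat_I).symm.trans
      (e.trans (Eqv.of_iff (lat_quad h2'))))).elim
  · rfl

/-- A two-dimensional convex lattice polytope in `ℝ²` with exactly `n` lattice points and no
interior lattice points is affinely unimodularly equivalent to exactly one of: the triangle
with vertices `(0,0)`, `(n-2,0)`, `(0,1)`; a quadrilateral with vertices `(0,0)`, `(k,0)`,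
`(l,1)`, `(0,1)` with `k ≥ l ≥ 1` and `k + l = n - 2`; or (only when `n = 6`) the triangle
with vertices `(0,0)`, `(2,0)`, `(0,2)`. -/
theorem classification_of_polytopes_without_interior_points (P : Set (Fin 2 → ℝ))
    (hP : IsConvexLatticePolytope P) (h2dim : ¬ Collinear ℝ P) (n : ℕ)
    (hn : {q : Fin 2 → ℤ | toR2 q ∈ P}.ncard = n)
    (hint : ∀ q : Fin 2 → ℤ, toR2 q ∉ interior P) :
    ∃! M : Set (Fin 2 → ℝ), M ∈ modelPolytopes n ∧ UnimodEquiv P M := by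
  have hc : Convex ℝ P := by
    obtain ⟨S, -, rfl⟩ := hP
    exact convex_convexHull _ _
  have hfin := finite_lat hP
  have hlatF : ∀ x y, (x, y) ∈ hfin.toFinset ↔ lat P x y := by
    intro x y; simp
  have hfun : (fun x y => (x, y) ∈ hfin.toFinset) = lat P := by
    funext x y; exact propext (hlatF x y)
  have hcard : 0 < hfin.toFinset.card := by
    obtain ⟨S, ⟨q, hq⟩, hS⟩ := hP
    refine Finset.card_pos.2 ⟨(q 0, q 1), (hlatF _ _).2 ?_⟩
    unfold lat
    rw [← toR2_eta, hS]
    exact subset_convexHull _ _ ⟨q, hq, rfl⟩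
  have hgood : Good (lat P) := by
    have := good_of_finset (hfin.toFinset.card - 1) hfin.toFinset (by omega)
    rw [hfun] at this
    exact this (cvx_lat hc) (sup_lat hc h2dim hint)
  rw [ncard_lat] at hn
  have hex : 3 ≤ n ∧ ∃ M, M ∈ modelPolytopes n ∧ UnimodEquiv P M := by
    rcases hgood with ⟨m, -, e⟩ | ⟨k, l, h1, h2, h3, e⟩ | e
    · exact (not_seg hP h2dim e).elim
    · lift k to ℕ using by omega
      lift l to ℕ using h2
      rw [e.ncard_eq, ncard_trap] at hn
      have h3n : 3 ≤ n := by omega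
      refine ⟨h3n, modelQuad k l, (mem_models h3n _).2
        (Or.inl ⟨k, l, by omega, by omega, hn, rfl⟩), ?_⟩
      exact unimodEquiv_of_eqv hP (poly_quad k l)
        (e.trans (Eqv.of_iff (lat_quad (by omega))).symm)
    · rw [e.ncard_eq, ncard_triI] at hn
      have h3n : 3 ≤ n := by omega
      refine ⟨h3n, modelI, (mem_models h3n _).2 (Or.inr ⟨hn.symm, rfl⟩), ?_⟩
      exact unimodEquiv_of_eqv hP poly_I (e.trans (Eqv.of_iff lat_I).symm)
  obtain ⟨h3n, M, hM, hPM⟩ := hex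
  refine ⟨M, ⟨hM, hPM⟩, ?_⟩
  rintro N ⟨hN, hPN⟩
  exact models_unique h3n hN hM
    ((eqv_of_unimodEquiv hPN).symm.trans (eqv_of_unimodEquiv hPM))
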